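/- arXiv:1111.3787 — 4 statements merged into one kernel-verified Lean document; each statement's English description precedes it below -/
import Mathlib

section
/- With K = ℚ(ζ + ζ^{-1}) for ζ a primitive 2^r-th root of unity (r ≥ 5), n = 2^{r-2}, e_0 = 1, e_i = ζ^i + ζ^{-i}, and α = 4 + e_1 - 2e_2 - e_3, one has: Tr_{K/ℚ}(α e_i e_i) = 2^r if i = 0 or i = 1; Tr_{K/ℚ}(α e_i e_i) = 2^{r+1} if 2 ≤ i < n - 1; and Tr_{K/ℚ}(α e_i e_i) = 3·2^r if i = n - 1. -/
open scoped IntermediateField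

/-- The negative of a primitive `2 ^ (t + 2)`-th root of unity is again one. -/
theorem IsPrimitiveRoot.neg_of_two_pow {w : ℂ} {t : ℕ} (hw : IsPrimitiveRoot w (2 ^ (t + 2))) :
    IsPrimitiveRoot (-w) (2 ^ (t + 2)) := by
  have hhalf : w ^ 2 ^ (t + 1) = -1 :=
    (hw.pow (by positivity) (pow_succ 2 (t + 1))).eq_neg_one_of_two_right
  have hcop : (2 ^ (t + 1) + 1).Coprime (2 ^ (t + 2)) := by
    refine Nat.Coprime.pow_right _ (Nat.Coprime.symm ?_)
    rw [Nat.coprime_two_left]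
    exact (Nat.even_pow.2 ⟨even_two, by omega⟩).add_one
  have h := hw.pow_of_coprime _ hcop
  rwa [pow_succ, hhalf, neg_one_mul] at h

/-- If `w` is a primitive `2 ^ (t + 2)`-th root of unity, then `w + w⁻¹` and its negative are
conjugate over `ℚ`. -/
theorem IsPrimitiveRoot.minpoly_neg_add_inv {w : ℂ} {t : ℕ}
    (hw : IsPrimitiveRoot w (2 ^ (t + 2))) :
    minpoly ℚ (-(w + w⁻¹)) = minpoly ℚ (w + w⁻¹) := by
  have hint : IsIntegral ℚ w := (hw.isIntegral (by positivity)).tower_top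
  have hmin : minpoly ℚ (-w) = minpoly ℚ w := by
    rw [← Polynomial.cyclotomic_eq_minpoly_rat hw (by positivity),
      ← Polynomial.cyclotomic_eq_minpoly_rat hw.neg_of_two_pow (by positivity)]
  have hroot : -w ∈ (minpoly ℚ w).aroots ℂ := by
    rw [Polynomial.mem_aroots]
    exact ⟨minpoly.ne_zero hint, hmin ▸ minpoly.aeval ℚ (-w)⟩
  let φ := (IntermediateField.algHomAdjoinIntegralEquiv ℚ hint).symm ⟨-w, hroot⟩
  have hφ : φ (IntermediateField.AdjoinSimple.gen ℚ w) = -w :=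
    IntermediateField.algHomAdjoinIntegralEquiv_symm_apply_gen ℚ hint ⟨-w, hroot⟩
  set g := IntermediateField.AdjoinSimple.gen ℚ w
  have h₁ := minpoly.algHom_eq φ φ.injective (g + g⁻¹)
  have h₂ := minpoly.algHom_eq ℚ⟮w⟯.val ℚ⟮w⟯.val.injective (g + g⁻¹)
  have hg : ℚ⟮w⟯.val g = w := IntermediateField.AdjoinSimple.coe_gen ℚ w
  rw [map_add, map_inv₀, hφ] at h₁
  rw [map_add, map_inv₀, hg] at h₂
  rw [h₂, ← h₁, neg_add, inv_neg]

/-- An element that is conjugate to its negative has trace zero. -/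
theorem Algebra.trace_eq_zero_of_minpoly_neg {F L : Type*} [Field F] [CharZero F] [Field L]
    [Algebra F L] [FiniteDimensional F L] {x : L} (hx : minpoly F (-x) = minpoly F x) :
    Algebra.trace F L x = 0 := by
  have hadj : F⟮-x⟯ = F⟮x⟯ := by
    apply le_antisymm <;> rw [IntermediateField.adjoin_simple_le_iff]
    · exact neg_mem (IntermediateField.mem_adjoin_simple_self F x)
    · simpa using neg_mem (IntermediateField.mem_adjoin_simple_self F (-x))
  have h : Algebra.trace F L (-x) = Algebra.trace F L x := by
    rw [trace_eq_finrank_mul_minpoly_nextCoeff, trace_eq_finrank_mul_minpoly_nextCoeff, hx, hadj]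
  rw [map_neg] at h
  exact self_eq_neg.1 h.symm

/-- The field generated by `ζ + ζ⁻¹`, for a root of unity `ζ`, is real. -/
theorem conj_eq_of_mem_adjoin_add_inv {ζ : ℂ} (hζ : ‖ζ‖ = 1) {x : ℂ} (hx : x ∈ ℚ⟮ζ + ζ⁻¹⟯) :
    starRingEnd ℂ x = x := by
  let R : IntermediateField ℚ ℂ := (Complex.ofRealAm.restrictScalars ℚ).fieldRange
  have hle : ℚ⟮ζ + ζ⁻¹⟯ ≤ R := by
    rw [IntermediateField.adjoin_simple_le_iff, Complex.inv_eq_conj hζ, Complex.add_conj]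
    exact ⟨2 * ζ.re, rfl⟩
  obtain ⟨y, rfl⟩ := hle hx
  exact Complex.conj_ofReal y

theorem finrank_adjoin_add_inv {ζ : ℂ} {N : ℕ} (hN : 2 < N) (hζ : IsPrimitiveRoot ζ N) :
    Module.finrank ℚ ℚ⟮ζ + ζ⁻¹⟯ * 2 = N.totient := by
  have h0 : ζ ≠ 0 := hζ.ne_zero (by omega)
  have hnorm : ‖ζ‖ = 1 := hζ.norm'_eq_one (by omega)
  have hint : IsIntegral ℚ ζ := (hζ.isIntegral (by omega)).tower_top
  have hle : ℚ⟮ζ + ζ⁻¹⟯ ≤ ℚ⟮ζ⟯ := by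
    rw [IntermediateField.adjoin_simple_le_iff]
    exact add_mem (IntermediateField.mem_adjoin_simple_self ℚ ζ)
      (inv_mem (IntermediateField.mem_adjoin_simple_self ℚ ζ))
  have htot : Module.finrank ℚ ℚ⟮ζ⟯ = N.totient := by
    rw [IntermediateField.adjoin.finrank hint,
      ← Polynomial.cyclotomic_eq_minpoly_rat hζ (by omega), Polynomial.natDegree_cyclotomic]
  have hintK : IsIntegral ℚ⟮ζ + ζ⁻¹⟯ ζ := hint.tower_top
  have hne : Module.finrank ℚ⟮ζ + ζ⁻¹⟯ ℚ⟮ζ + ζ⁻¹⟯⟮ζ⟯ ≠ 1 := by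
    rw [Ne, IntermediateField.finrank_adjoin_simple_eq_one_iff, IntermediateField.mem_bot]
    rintro ⟨y, hy⟩
    have hreal : starRingEnd ℂ ζ = ζ := by
      have h := conj_eq_of_mem_adjoin_add_inv hnorm y.2
      change (y : ℂ) = ζ at hy
      rwa [hy] at h
    have hsq : ζ ^ 2 = 1 := by
      rw [← Complex.inv_eq_conj hnorm] at hreal
      field_simp at hreal
      exact hreal.symm
    exact absurd (Nat.le_of_dvd two_pos (hζ.dvd_of_pow_eq_one 2 hsq)) (by omega)
  have hpos : 0 < Module.finrank ℚ⟮ζ + ζ⁻¹⟯ ℚ⟮ζ + ζ⁻¹⟯⟮ζ⟯ := by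
    rw [IntermediateField.adjoin.finrank hintK]
    exact minpoly.natDegree_pos hintK
  have hle2 : Module.finrank ℚ⟮ζ + ζ⁻¹⟯ ℚ⟮ζ + ζ⁻¹⟯⟮ζ⟯ ≤ 2 := by
    rw [IntermediateField.adjoin.finrank hintK]
    let g := IntermediateField.AdjoinSimple.gen ℚ (ζ + ζ⁻¹)
    let p : Polynomial ℚ⟮ζ + ζ⁻¹⟯ := Polynomial.X ^ 2 + (Polynomial.C (-g) * Polynomial.X + 1)
    have hmonic : p.Monic := by
      simp only [p]
      monicity!
    have hdeg : p.natDegree = 2 := by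
      simp only [p]
      compute_degree!
    have hroot : Polynomial.aeval ζ p = 0 := by
      have hg : algebraMap ℚ⟮ζ + ζ⁻¹⟯ ℂ g = ζ + ζ⁻¹ :=
        IntermediateField.AdjoinSimple.algebraMap_gen ℚ (ζ + ζ⁻¹)
      simp only [p, map_add, map_mul, map_pow, Polynomial.aeval_X, Polynomial.aeval_C, map_neg,
        map_one, hg]
      field_simp
      ring
    rw [← hdeg]
    exact Polynomial.natDegree_le_natDegree (minpoly.min _ ζ hmonic hroot)
  rw [← htot, ← IntermediateField.finrank_bot_mul_relfinrank hle,
    IntermediateField.relfinrank_eq_finrank_of_le hle, IntermediateField.extendScalars_adjoin hle]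
  congr 1
  omega

/-- `ζ ^ k + ζ ^ (-k)` has trace zero for a primitive `2 ^ r`-th root of unity `ζ`, unless
`ζ ^ k = ± 1`. -/
theorem trace_pow_add_inv_pow_eq_zero {ζ : ℂ} {r k : ℕ} (hζ : IsPrimitiveRoot ζ (2 ^ r))
    [FiniteDimensional ℚ ℚ⟮ζ + ζ⁻¹⟯] (hk : ¬ 2 ^ r ∣ 2 * k) {x : ℚ⟮ζ + ζ⁻¹⟯}
    (hx : (x : ℂ) = ζ ^ k + ζ⁻¹ ^ k) : Algebra.trace ℚ ℚ⟮ζ + ζ⁻¹⟯ x = 0 := by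
  obtain ⟨t, -, ht⟩ := (Nat.dvd_prime_pow Nat.prime_two).1
    (orderOf_dvd_of_pow_eq_one (x := ζ ^ k) (n := 2 ^ r)
      (by rw [← pow_mul, mul_comm, pow_mul, hζ.pow_eq_one, one_pow]))
  have ht2 : 2 ≤ t := by
    by_contra! hlt
    apply hk
    apply hζ.dvd_of_pow_eq_one
    rw [mul_comm, pow_mul, ← orderOf_dvd_iff_pow_eq_one, ht]
    exact pow_dvd_pow 2 (n := 1) (by omega)
  obtain ⟨s, rfl⟩ := Nat.exists_eq_add_of_le' ht2
  have hw : IsPrimitiveRoot (ζ ^ k) (2 ^ (s + 2)) := ht ▸ IsPrimitiveRoot.orderOf (ζ ^ k)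
  apply Algebra.trace_eq_zero_of_minpoly_neg
  have h₁ : minpoly ℚ (-(x : ℂ)) = minpoly ℚ (-x) :=
    minpoly.algHom_eq ℚ⟮ζ + ζ⁻¹⟯.val ℚ⟮ζ + ζ⁻¹⟯.val.injective (-x)
  have h₂ : minpoly ℚ (x : ℂ) = minpoly ℚ x :=
    minpoly.algHom_eq ℚ⟮ζ + ζ⁻¹⟯.val ℚ⟮ζ + ζ⁻¹⟯.val.injective x
  rw [← h₁, ← h₂, hx, inv_pow]
  exact hw.minpoly_neg_add_inv

/-- With `K = ℚ(ζ + ζ⁻¹)` for `ζ` a primitive `2^r`-th root of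
unity (`r ≥ 5`), `n = 2^{r-2}`, `e₀ = 1`, `eᵢ = ζ^i + ζ^{-i}`, and
`α = 4 + e₁ - 2e₂ - e₃`: `Tr(α eᵢ eᵢ) = 2^r` for `i = 0, 1`;
`Tr(α eᵢ eᵢ) = 2^{r+1}` for `2 ≤ i < n - 1`; and `Tr(α eᵢ eᵢ) = 3·2^r` for `i = n - 1`. -/
theorem trace_alpha_ei_ei
    (r n : ℕ) (hr : 5 ≤ r) (hn : n = 2 ^ (r - 2))
    (ζ : ℂ) (hζ : IsPrimitiveRoot ζ (2 ^ r))
    (e : ℕ → ℚ⟮ζ + ζ⁻¹⟯) (he0 : e 0 = 1)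
    (he : ∀ i : ℕ, 1 ≤ i → ((e i : ℂ) = ζ ^ i + ζ⁻¹ ^ i))
    (α : ℚ⟮ζ + ζ⁻¹⟯) (hα : α = 4 + e 1 - 2 * e 2 - e 3)
    (i : ℕ) (hi : i ≤ n - 1) :
    (i = 0 ∨ i = 1 → Algebra.trace ℚ ℚ⟮ζ + ζ⁻¹⟯ (α * e i * e i) = 2 ^ r) ∧
    (2 ≤ i ∧ i < n - 1 → Algebra.trace ℚ ℚ⟮ζ + ζ⁻¹⟯ (α * e i * e i) = 2 ^ (r + 1)) ∧
    (i = n - 1 → Algebra.trace ℚ ℚ⟮ζ + ζ⁻¹⟯ (α * e i * e i) = 3 * 2 ^ r) := by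
  have h4n : 2 ^ r = 4 * n := by
    rw [hn, show r = (r - 2) + 2 by omega, pow_add]
    simp [mul_comm]
  have hn8 : 8 ≤ n := hn ▸ Nat.pow_le_pow_right (n := 2) two_pos (show 3 ≤ r - 2 by omega)
  have h4nq : (2 : ℚ) ^ r = 4 * n := mod_cast h4n
  have h0 : ζ ≠ 0 := hζ.ne_zero (by positivity)
  have hfin : Module.finrank ℚ ℚ⟮ζ + ζ⁻¹⟯ = n := by
    have h := finrank_adjoin_add_inv (by omega) hζ
    rw [Nat.totient_prime_pow Nat.prime_two (by omega), show r - 1 = r - 2 + 1 by omega,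
      pow_succ, ← hn] at h
    omega
  have : FiniteDimensional ℚ ℚ⟮ζ + ζ⁻¹⟯ := Module.finite_of_finrank_pos (by omega)
  have htr (q : ℚ) : Algebra.trace ℚ ℚ⟮ζ + ζ⁻¹⟯ (algebraMap ℚ _ q) = n * q := by
    rw [Algebra.trace_algebraMap, hfin, nsmul_eq_mul]
  have hzero (k : ℕ) (h1 : 1 ≤ k) (h2 : k ≠ 2 * n) (h3 : k < 4 * n) :
      Algebra.trace ℚ ℚ⟮ζ + ζ⁻¹⟯ (e k) = 0 := by
    refine trace_pow_add_inv_pow_eq_zero hζ ?_ (he k h1)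
    rw [h4n]
    rintro ⟨c, hc⟩
    have hc2 : c < 2 := by
      by_contra! h
      nlinarith
    interval_cases c <;> omega
  have htwo : ((2 : ℚ⟮ζ + ζ⁻¹⟯) : ℂ) = 2 := rfl
  have hmid : e (2 * n) = algebraMap ℚ _ (-2) := by
    have hhalf : ζ ^ (2 * n) = -1 :=
      (hζ.pow (by positivity) (show 2 ^ r = 2 * n * 2 by omega)).eq_neg_one_of_two_right
    apply Subtype.ext
    rw [he _ (by omega), inv_pow, hhalf]
    simp only [map_neg, map_ofNat]
    push_cast
    rw [htwo]
    norm_num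
  have hmul (a b : ℕ) (ha : 1 ≤ a) (hb : 1 ≤ b) : e a * e (a + b) = e (2 * a + b) + e b := by
    apply Subtype.ext
    push_cast
    rw [he a ha, he b hb, he _ (by omega), he _ (by omega)]
    simp only [inv_pow]
    field_simp
    ring
  have hsq (a : ℕ) (ha : 1 ≤ a) : e a * e a = e (2 * a) + 2 := by
    apply Subtype.ext
    push_cast
    rw [htwo, he a ha, he _ (by omega)]
    simp only [inv_pow]
    field_simp
    ring
  have hlarge (j : ℕ) (hj : j + 2 ≤ n - 1) :
      Algebra.trace ℚ ℚ⟮ζ + ζ⁻¹⟯ (α * e (j + 2) * e (j + 2)) =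
        8 * n - 2 * Algebra.trace ℚ ℚ⟮ζ + ζ⁻¹⟯ (e (2 * j + 6)) := by
    have hexp : α * e (j + 2) * e (j + 2) = algebraMap ℚ _ 8 + (2 : ℚ) • e 1 - (4 : ℚ) • e 2
        - (2 : ℚ) • e 3 + (4 : ℚ) • e (2 * j + 4) + (e (2 * j + 5) + e (2 * j + 3))
        - (2 : ℚ) • (e (2 * j + 6) + e (2 * j + 2)) - (e (2 * j + 7) + e (2 * j + 1)) := by
      have m1 := hmul 1 (2 * j + 3) (by omega) (by omega)
      have m2 := hmul 2 (2 * j + 2) (by omega) (by omega)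
      have m3 := hmul 3 (2 * j + 1) (by omega) (by omega)
      have m := hsq (j + 2) (by omega)
      ring_nf at m1 m2 m3 m ⊢
      simp only [Algebra.smul_def, map_ofNat, hα]
      linear_combination (4 + e 1 - 2 * e 2 - e 3) * m + m1 - 2 * m2 - m3
    rw [hexp]
    simp only [map_add, map_sub, map_smul, htr]
    rw [hzero 1, hzero 2, hzero 3, hzero (2 * j + 4), hzero (2 * j + 5), hzero (2 * j + 3),
      hzero (2 * j + 2), hzero (2 * j + 7), hzero (2 * j + 1)]
    · simp only [smul_eq_mul]
      ring
    all_goals omega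
  refine ⟨?_, ?_, ?_⟩
  · rintro (rfl | rfl)
    · have hexp : α * e 0 * e 0 = algebraMap ℚ _ 4 + e 1 - (2 : ℚ) • e 2 - e 3 := by
        simp only [Algebra.smul_def, map_ofNat, hα, he0, mul_one]
      rw [hexp]
      simp only [map_add, map_sub, map_smul, htr]
      rw [hzero 1, hzero 2, hzero 3, h4nq]
      · simp only [smul_eq_mul]
        ring
      all_goals omega
    · have hexp : α * e 1 * e 1 = algebraMap ℚ _ 4 + (2 : ℚ) • e 1 - e 3
          - (2 : ℚ) • e 4 - e 5 := by
        have m1 := hmul 1 1 le_rfl le_rfl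
        have m2 := hsq 2 (by omega)
        have m3 := hmul 2 1 (by omega) (by omega)
        have m := hsq 1 le_rfl
        norm_num at m1 m2 m3 m
        simp only [Algebra.smul_def, map_ofNat, hα]
        linear_combination (4 + e 1 - 2 * e 2 - e 3) * m + m1 - 2 * m2 - m3
      rw [hexp]
      simp only [map_add, map_sub, map_smul, htr]
      rw [hzero 1, hzero 3, hzero 4, hzero 5, h4nq]
      · simp only [smul_eq_mul]
        ring
      all_goals omega
  · rintro ⟨h2, hlt⟩
    obtain ⟨j, rfl⟩ := Nat.exists_eq_add_of_le' h2
    rw [hlarge j hi, hzero _ (by omega) (by omega) (by omega), pow_succ, h4nq]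
    ring
  · intro hlast
    obtain ⟨j, rfl⟩ := Nat.exists_eq_add_of_le' (show 2 ≤ i by omega)
    rw [hlarge j hi, show 2 * j + 6 = 2 * n by omega, hmid, htr, h4nq]
    ring
end

section
/- With K = ℚ(ζ + ζ^{-1}) for ζ a primitive 2^r-th root of unity (r ≥ 5), n = 2^{r-2}, e_i = ζ^i + ζ^{-i}, and α = 4 + e_1 - 2e_2 - e_3, one has for all integers i, j with 0 < i < j ≤ n - 1: Tr_{K/ℚ}(α e_i e_j) = 2^{r-1} if j - i = 1 and (i,j) ∉ {(1,2), (n-2, n-1)}; Tr_{K/ℚ}(α e_i e_j) = -2^r if j - i = 2; Tr_{K/ℚ}(α e_i e_j) = -2^{r-1} if j - i = 3; Tr_{K/ℚ}(α e_i e_j) = 2^r if (i,j) = (n-2, n-1); and Tr_{K/ℚ}(α e_i e_j) = 0 in all other cases (including (i,j) = (1,2)). -/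
open scoped IntermediateField

open Polynomial in
/-- A conjugate of `ζ + ζ⁻¹` is obtained by replacing `ζ` with a power coprime to its order. -/
theorem IsPrimitiveRoot.aeval_minpoly_add_inv_pow {N a : ℕ} (hN : 0 < N) {ζ : ℂ}
    (hζ : IsPrimitiveRoot ζ N) (ha : a.Coprime N) :
    aeval (ζ ^ a + (ζ ^ a)⁻¹) (minpoly ℚ (ζ + ζ⁻¹)) = 0 := by
  have inv_eq : ∀ x : ℂ, x ^ N = 1 → x⁻¹ = x ^ (N - 1) := fun x hx =>
    inv_eq_of_mul_eq_one_right (by rw [← pow_succ', Nat.sub_add_cancel hN, hx])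
  have key : ∀ x : ℂ, x ^ N = 1 →
      aeval x ((minpoly ℚ (ζ + ζ⁻¹)).comp (X + X ^ (N - 1))) =
        aeval (x + x⁻¹) (minpoly ℚ (ζ + ζ⁻¹)) := fun x hx => by
    rw [aeval_comp, inv_eq x hx]; simp
  have h2 := hζ.pow_of_coprime a ha
  rw [← key _ h2.pow_eq_one]
  have h0 : minpoly ℚ ζ ∣ (minpoly ℚ (ζ + ζ⁻¹)).comp (X + X ^ (N - 1)) :=
    minpoly.dvd _ _ (by rw [key _ hζ.pow_eq_one, minpoly.aeval])
  rw [← cyclotomic_eq_minpoly_rat hζ hN, cyclotomic_eq_minpoly_rat h2 hN] at h0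
  exact aeval_eq_zero_of_dvd_aeval_eq_zero h0 (minpoly.aeval _ _)

theorem zpow_add_zpow_neg_mem {F L : Type*} [Field F] [Field L] [Algebra F L] {ζ : L}
    (hζ : ζ ≠ 0) (k : ℤ) : ζ ^ k + ζ ^ (-k) ∈ F⟮ζ + ζ⁻¹⟯ := by
  have hnat : ∀ m : ℕ, ζ ^ (m : ℤ) + ζ ^ (-(m : ℤ)) ∈ F⟮ζ + ζ⁻¹⟯ := by
    intro m
    induction m using Nat.twoStepInduction with
    | zero => simpa using add_mem (one_mem _) (one_mem _)
    | one => simpa using IntermediateField.mem_adjoin_simple_self F (ζ + ζ⁻¹)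
    | more m h0 h1 =>
      convert sub_mem (mul_mem (IntermediateField.mem_adjoin_simple_self F (ζ + ζ⁻¹)) h1) h0 using 1
      push_cast
      simp only [neg_add, zpow_add₀ hζ, zpow_neg, zpow_natCast]
      norm_num [zpow_neg]
      field_simp
      ring
  obtain h | h := Int.natAbs_eq k
  · rw [h]; exact hnat _
  · rw [h, neg_neg, add_comm (ζ ^ (-(k.natAbs : ℤ)))]; exact hnat _

/-- The element `ζ ^ k + ζ ^ (-k)` of `ℚ(ζ + ζ⁻¹)`. -/
noncomputable def zpowAddZPowNeg {ζ : ℂ} (hζ : ζ ≠ 0) (k : ℤ) : ℚ⟮ζ + ζ⁻¹⟯ :=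
  ⟨ζ ^ k + ζ ^ (-k), zpow_add_zpow_neg_mem hζ k⟩

section

variable {ζ : ℂ} (hζ : ζ ≠ 0)

theorem zpowAddZPowNeg_mul (k l : ℤ) :
    zpowAddZPowNeg hζ k * zpowAddZPowNeg hζ l =
      zpowAddZPowNeg hζ (k + l) + zpowAddZPowNeg hζ (k - l) := by
  apply Subtype.ext
  simp only [zpowAddZPowNeg, MulMemClass.coe_mul, AddMemClass.coe_add, sub_eq_add_neg, neg_add,
    neg_neg, zpow_add₀ hζ]
  ring

theorem zpowAddZPowNeg_neg (k : ℤ) : zpowAddZPowNeg hζ (-k) = zpowAddZPowNeg hζ k := by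
  apply Subtype.ext
  simp [zpowAddZPowNeg, add_comm]

theorem zpowAddZPowNeg_zero : zpowAddZPowNeg hζ 0 = 2 := by
  apply Subtype.ext
  norm_num [zpowAddZPowNeg]
  rfl

theorem AlgHom.map_zpowAddZPowNeg (φ : ℚ⟮ζ + ζ⁻¹⟯ →ₐ[ℚ] ℚ⟮ζ + ζ⁻¹⟯) {a : ℤ}
    (h : φ (zpowAddZPowNeg hζ 1) = zpowAddZPowNeg hζ a) (k : ℕ) :
    φ (zpowAddZPowNeg hζ k) = zpowAddZPowNeg hζ (a * k) := by
  induction k using Nat.twoStepInduction with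
  | zero => simpa [zpowAddZPowNeg_zero] using map_ofNat φ 2
  | one => simpa using h
  | more k h0 h1 =>
    have e1 : zpowAddZPowNeg hζ ((k + 2 : ℕ) : ℤ) =
        zpowAddZPowNeg hζ ((k + 1 : ℕ) : ℤ) * zpowAddZPowNeg hζ 1 - zpowAddZPowNeg hζ k := by
      rw [zpowAddZPowNeg_mul]
      push_cast
      ring_nf
    rw [e1, map_sub, map_mul, h0, h1, h, zpowAddZPowNeg_mul]
    push_cast
    ring_nf

end

/-- The automorphism of `ℚ(ζ + ζ⁻¹)` induced by `ζ ↦ ζ ^ a`. -/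
theorem IsPrimitiveRoot.exists_algEquiv_add_inv {N a : ℕ} (hN : 0 < N) {ζ : ℂ}
    (hζ : IsPrimitiveRoot ζ N) (ha : a.Coprime N) (h0 : ζ ≠ 0) :
    ∃ φ : ℚ⟮ζ + ζ⁻¹⟯ ≃ₐ[ℚ] ℚ⟮ζ + ζ⁻¹⟯,
      ∀ k : ℕ, φ (zpowAddZPowNeg h0 k) = zpowAddZPowNeg h0 (a * k) := by
  have hint : IsIntegral ℚ (ζ + ζ⁻¹) :=
    ((hζ.isIntegral hN).add (hζ.inv.isIntegral hN)).tower_top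
  have := IntermediateField.adjoin.finiteDimensional hint
  have hroot : Polynomial.aeval (zpowAddZPowNeg h0 a)
      (minpoly ℚ (IntermediateField.adjoin.powerBasis hint).gen) = 0 := by
    rw [IntermediateField.adjoin.powerBasis_gen,
      show minpoly ℚ (IntermediateField.AdjoinSimple.gen ℚ (ζ + ζ⁻¹)) = minpoly ℚ (ζ + ζ⁻¹) from
        IntermediateField.minpoly_gen ..]
    apply (algebraMap ℚ⟮ζ + ζ⁻¹⟯ ℂ).injective
    rw [← Polynomial.aeval_algebraMap_apply, map_zero]
    simpa [zpowAddZPowNeg] using hζ.aeval_minpoly_add_inv_pow hN ha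
  let φ := (IntermediateField.adjoin.powerBasis hint).lift _ hroot
  have hφ : φ (zpowAddZPowNeg h0 1) = zpowAddZPowNeg h0 a := by
    convert (IntermediateField.adjoin.powerBasis hint).lift_gen _ hroot using 2
    apply Subtype.ext
    simp [zpowAddZPowNeg]
  refine ⟨AlgEquiv.ofBijective φ φ.bijective, ?_⟩
  exact fun k => φ.map_zpowAddZPowNeg h0 hφ k

theorem IsPrimitiveRoot.notMem_adjoin_add_inv {N : ℕ} (hN : 2 < N) {ζ : ℂ}
    (hζ : IsPrimitiveRoot ζ N) : ζ ∉ ℚ⟮ζ + ζ⁻¹⟯ := by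
  intro hmem
  have hle : ℚ⟮ζ + ζ⁻¹⟯ ≤ (Complex.ofRealAm.restrictScalars ℚ).fieldRange := by
    rw [IntermediateField.adjoin_simple_le_iff]
    refine ⟨2 * ζ.re, ?_⟩
    have := Complex.inv_eq_conj (hζ.norm'_eq_one (by omega))
    rw [this, Complex.add_conj]
    simp
  obtain ⟨x, hx⟩ := hle hmem
  have hx : (x : ℂ) = ζ := hx
  have hnorm := hζ.norm'_eq_one (by omega)
  rw [← hx, Complex.norm_real, Real.norm_eq_abs] at hnorm
  have h2 : ζ ^ 2 = 1 := by
    rw [← hx]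
    rw [← Complex.ofReal_pow, ← sq_abs, hnorm]
    simp
  exact absurd (Nat.le_of_dvd two_pos (hζ.dvd_of_pow_eq_one 2 h2)) (by omega)

open Polynomial in
theorem IsPrimitiveRoot.two_mul_finrank_adjoin_add_inv {N : ℕ} (hN : 2 < N) {ζ : ℂ}
    (hζ : IsPrimitiveRoot ζ N) :
    2 * Module.finrank ℚ ℚ⟮ζ + ζ⁻¹⟯ = N.totient := by
  have h0 : ζ ≠ 0 := hζ.ne_zero (by omega)
  have hζK : IsIntegral ℚ⟮ζ + ζ⁻¹⟯ ζ := (hζ.isIntegral (by omega)).tower_top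
  have hζQ : IsIntegral ℚ ζ := (hζ.isIntegral (by omega)).tower_top
  have hdeg : (minpoly ℚ⟮ζ + ζ⁻¹⟯ ζ).natDegree = 2 := by
    apply le_antisymm
    · have hmonic : (X ^ 2 - C (IntermediateField.AdjoinSimple.gen ℚ (ζ + ζ⁻¹)) * X + 1 :
          ℚ⟮ζ + ζ⁻¹⟯[X]).natDegree = 2 := by compute_degree!
      rw [← hmonic]
      refine natDegree_le_of_dvd (minpoly.dvd _ _ ?_) (fun h => by simp [h] at hmonic)
      simp
      field_simp
      ring
    · rw [minpoly.two_le_natDegree_iff hζK]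
      rintro ⟨x, hx⟩
      have hmem : (x : ℂ) ∈ ℚ⟮ζ + ζ⁻¹⟯ := x.2
      rw [show (x : ℂ) = ζ from hx] at hmem
      exact hζ.notMem_adjoin_add_inv hN hmem
  have htower := Module.finrank_mul_finrank ℚ ℚ⟮ζ + ζ⁻¹⟯ (ℚ⟮ζ + ζ⁻¹⟯⟮ζ⟯)
  rw [IntermediateField.adjoin.finrank hζK, hdeg] at htower
  have hL : (ℚ⟮ζ + ζ⁻¹⟯⟮ζ⟯).restrictScalars ℚ = ℚ⟮ζ⟯ := by
    refine (IntermediateField.adjoin_simple_adjoin_simple ℚ (ζ + ζ⁻¹) ζ).trans ?_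
    apply le_antisymm
    · rw [IntermediateField.adjoin_le_iff]
      have hm := IntermediateField.mem_adjoin_simple_self ℚ ζ
      rintro x (rfl | rfl)
      · exact add_mem hm (inv_mem hm)
      · exact hm
    · rw [IntermediateField.adjoin_simple_le_iff]
      exact IntermediateField.subset_adjoin _ _ (by simp)
  have hfin : Module.finrank ℚ (ℚ⟮ζ + ζ⁻¹⟯⟮ζ⟯) = Module.finrank ℚ ℚ⟮ζ⟯ := by
    rw [← hL]; rfl
  rw [hfin, IntermediateField.adjoin.finrank hζQ, ← cyclotomic_eq_minpoly_rat hζ (by omega),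
    natDegree_cyclotomic] at htower
  omega

theorem IsPrimitiveRoot.zpow_two_pow_eq_neg_one {s : ℕ} {ζ : ℂ}
    (hζ : IsPrimitiveRoot ζ (2 ^ (s + 1))) :
    ζ ^ ((2 : ℤ) ^ s) = -1 := by
  have : ζ ^ 2 ^ s = -1 := (hζ.pow (by positivity) (pow_succ 2 s)).eq_neg_one_of_two_right
  rw [← this, ← zpow_natCast]
  push_cast
  rfl

theorem zpowAddZPowNeg_add_two_pow_mul_odd {s : ℕ} {ζ : ℂ}
    (hζ : IsPrimitiveRoot ζ (2 ^ (s + 1))) (h0 : ζ ≠ 0) (k : ℤ) {l : ℤ} (hl : Odd l) :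
    zpowAddZPowNeg h0 (k + 2 ^ s * l) = -zpowAddZPowNeg h0 k := by
  apply Subtype.ext
  simp only [zpowAddZPowNeg, neg_add, zpow_add₀ h0, zpow_neg, zpow_mul,
    hζ.zpow_two_pow_eq_neg_one, hl.neg_one_zpow, NegMemClass.coe_neg]
  norm_num

theorem trace_zpowAddZPowNeg_eq_zero {s : ℕ} {ζ : ℂ}
    (hζ : IsPrimitiveRoot ζ (2 ^ (s + 1))) (h0 : ζ ≠ 0) {k : ℤ} (hk : ¬ (2 : ℤ) ^ s ∣ k) :
    Algebra.trace ℚ _ (zpowAddZPowNeg h0 k) = 0 := by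
  wlog hpos : 0 ≤ k generalizing k
  · rw [← zpowAddZPowNeg_neg]
    exact this (by rwa [dvd_neg]) (by omega)
  lift k to ℕ using hpos
  have hk0 : k ≠ 0 := by rintro rfl; simp at hk
  obtain ⟨t, m, hm, rfl⟩ := Nat.exists_eq_two_pow_mul_odd hk0
  have hts : t < s := by
    by_contra! h
    exact hk (by exact_mod_cast (pow_dvd_pow 2 h).mul_right m)
  obtain ⟨u, rfl⟩ := Nat.exists_eq_add_of_lt hts
  have hcop : (1 + 2 ^ (u + 1)).Coprime (2 ^ (t + u + 1 + 1)) := by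
    apply Nat.Coprime.pow_right
    rw [Nat.coprime_two_right]
    exact odd_one.add_even (by simp [Nat.even_pow])
  obtain ⟨φ, hφ⟩ := hζ.exists_algEquiv_add_inv (by positivity) hcop h0
  have h1 := hφ (2 ^ t * m)
  have h2 := zpowAddZPowNeg_add_two_pow_mul_odd hζ h0 ((2 ^ t * m : ℕ) : ℤ) (l := m)
    (by exact_mod_cast hm)
  have h3 : (((1 + 2 ^ (u + 1) : ℕ) : ℤ) * ((2 ^ t * m : ℕ) : ℤ)) =
      ((2 ^ t * m : ℕ) : ℤ) + 2 ^ (t + u + 1) * m := by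
    push_cast
    ring
  rw [h3, h2] at h1
  have h4 := Algebra.trace_eq_of_algEquiv φ (zpowAddZPowNeg h0 ((2 ^ t * m : ℕ) : ℤ))
  rw [h1, map_neg] at h4
  linarith

/-- With `K = ℚ(ζ + ζ⁻¹)` for `ζ` a primitive `2^r`-th root of
unity (`r ≥ 5`), `n = 2^{r-2}`, `eᵢ = ζ^i + ζ^{-i}`, and `α = 4 + e₁ - 2e₂ - e₃`,
for all `0 < i < j ≤ n - 1`: `Tr(α eᵢ eⱼ) = 2^{r-1}` if `j - i = 1` and
`(i,j) ∉ {(1,2), (n-2,n-1)}`; `= -2^r` if `j - i = 2`; `= -2^{r-1}` if `j - i = 3`;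
`= 2^r` if `(i,j) = (n-2, n-1)`; and `= 0` in all other cases. -/
theorem trace_alpha_ei_ej
    (r n : ℕ) (hr : 5 ≤ r) (hn : n = 2 ^ (r - 2))
    (ζ : ℂ) (hζ : IsPrimitiveRoot ζ (2 ^ r))
    (e : ℕ → ℚ⟮ζ + ζ⁻¹⟯) (he0 : e 0 = 1)
    (he : ∀ i : ℕ, 1 ≤ i → ((e i : ℂ) = ζ ^ i + ζ⁻¹ ^ i))
    (α : ℚ⟮ζ + ζ⁻¹⟯) (hα : α = 4 + e 1 - 2 * e 2 - e 3)
    (i j : ℕ) (hij : 0 < i ∧ i < j ∧ j ≤ n - 1) :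
    (j - i = 1 ∧ ¬(i = 1 ∧ j = 2) ∧ ¬(i = n - 2 ∧ j = n - 1) →
      Algebra.trace ℚ ℚ⟮ζ + ζ⁻¹⟯ (α * e i * e j) = 2 ^ (r - 1)) ∧
    (j - i = 2 → Algebra.trace ℚ ℚ⟮ζ + ζ⁻¹⟯ (α * e i * e j) = -2 ^ r) ∧
    (j - i = 3 → Algebra.trace ℚ ℚ⟮ζ + ζ⁻¹⟯ (α * e i * e j) = -2 ^ (r - 1)) ∧
    (i = n - 2 ∧ j = n - 1 → Algebra.trace ℚ ℚ⟮ζ + ζ⁻¹⟯ (α * e i * e j) = 2 ^ r) ∧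
    (¬(j - i = 1 ∧ ¬(i = 1 ∧ j = 2) ∧ ¬(i = n - 2 ∧ j = n - 1)) ∧
        j - i ≠ 2 ∧ j - i ≠ 3 ∧ ¬(i = n - 2 ∧ j = n - 1) →
      Algebra.trace ℚ ℚ⟮ζ + ζ⁻¹⟯ (α * e i * e j) = 0) := by
  obtain ⟨s, rfl⟩ : ∃ s, r = s + 2 := ⟨r - 2, by omega⟩
  simp only [Nat.add_sub_cancel] at hn
  have h0 : ζ ≠ 0 := hζ.ne_zero (by positivity)
  have hn8 : 8 ≤ n := hn ▸ Nat.pow_le_pow_right (n := 2) two_pos (show 3 ≤ s by omega)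
  have hnZ : (2 : ℤ) ^ (s + 1) = 2 * n := by rw [hn]; push_cast; ring
  have hr1 : (2 : ℚ) ^ (s + 2 - 1) = 2 * n := by
    rw [hn, show s + 2 - 1 = s + 1 by omega]; push_cast; ring
  have hr2 : (2 : ℚ) ^ (s + 2) = 4 * n := by rw [hn]; push_cast; ring
  have hdim : Module.finrank ℚ ℚ⟮ζ + ζ⁻¹⟯ = n := by
    have h := hζ.two_mul_finrank_adjoin_add_inv (by rw [pow_add, ← hn]; omega)
    rw [Nat.totient_prime_pow_succ Nat.prime_two, pow_succ, ← hn] at h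
    omega
  obtain ⟨T, hT⟩ : ∃ T : ℤ → ℚ, ∀ k, T k = Algebra.trace ℚ _ (zpowAddZPowNeg h0 k) :=
    ⟨_, fun _ => rfl⟩
  have T_zero : T 0 = 2 * n := by
    rw [hT, zpowAddZPowNeg_zero]
    have h := Algebra.trace_algebraMap (S := ℚ⟮ζ + ζ⁻¹⟯) (2 : ℚ)
    rw [map_ofNat, hdim] at h
    rw [h, nsmul_eq_mul, mul_comm]
  have T_neg (k : ℤ) : T (-k) = T k := by rw [hT, hT, zpowAddZPowNeg_neg]
  have T_top : T (2 * n) = -(2 * n) := by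
    have h := zpowAddZPowNeg_add_two_pow_mul_odd hζ h0 0 odd_one
    rw [hnZ, zero_add, mul_one] at h
    rw [hT, h, map_neg, ← hT, T_zero]
  have T_mid (k : ℤ) (h1 : 0 < k) (h2 : k < 2 * n) : T k = 0 := by
    rw [hT]
    refine trace_zpowAddZPowNeg_eq_zero hζ h0 fun hd => ?_
    rw [hnZ] at hd
    exact absurd (Int.le_of_dvd h1 hd) (by omega)
  have he' (k : ℕ) (hk : 1 ≤ k) : e k = zpowAddZPowNeg h0 k := by
    apply Subtype.ext
    rw [he k hk]
    simp [zpowAddZPowNeg]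
  obtain ⟨hi, hlt, hj⟩ := hij
  obtain ⟨d, rfl⟩ := Nat.exists_eq_add_of_lt hlt
  have key : Algebra.trace ℚ ℚ⟮ζ + ζ⁻¹⟯ (α * e i * e (i + d + 1)) =
      4 * (T (2 * i + d + 1) + T (d + 1)) + (T (2 * i + d + 2) + T (2 * i + d) + T (d + 2) + T d)
      - 2 * (T (2 * i + d + 3) + T (2 * i + d - 1) + T (d + 3) + T (d - 1))
      - (T (2 * i + d + 4) + T (2 * i + d - 2) + T (d + 4) + T (d - 2)) := by
    have hexp : α * e i * e (i + d + 1) =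
        (4 : ℚ) • (zpowAddZPowNeg h0 (2 * i + d + 1) + zpowAddZPowNeg h0 (d + 1))
        + (zpowAddZPowNeg h0 (2 * i + d + 2) + zpowAddZPowNeg h0 (2 * i + d)
          + zpowAddZPowNeg h0 (d + 2) + zpowAddZPowNeg h0 d)
        - (2 : ℚ) • (zpowAddZPowNeg h0 (2 * i + d + 3) + zpowAddZPowNeg h0 (2 * i + d - 1)
          + zpowAddZPowNeg h0 (d + 3) + zpowAddZPowNeg h0 (d - 1))
        - (zpowAddZPowNeg h0 (2 * i + d + 4) + zpowAddZPowNeg h0 (2 * i + d - 2)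
          + zpowAddZPowNeg h0 (d + 4) + zpowAddZPowNeg h0 (d - 2)) := by
      have hprod : e (i + d + 1) * e i =
          zpowAddZPowNeg h0 (2 * i + d + 1) + zpowAddZPowNeg h0 (d + 1) := by
        rw [he' _ hi, he' _ (by omega), zpowAddZPowNeg_mul]
        push_cast
        congr 2 <;> ring
      rw [mul_assoc, mul_comm (e i), hprod, hα, he' 1 (by omega), he' 2 (by omega),
        he' 3 (by omega)]
      have hm (k l : ℤ) := zpowAddZPowNeg_mul h0 k l
      have a1 := hm (2 * i + d + 1) 1
      have a2 := hm (2 * i + d + 1) 2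
      have a3 := hm (2 * i + d + 1) 3
      have b1 := hm (d + 1) 1
      have b2 := hm (d + 1) 2
      have b3 := hm (d + 1) 3
      rw [show (2 * i + d + 1 + 1 : ℤ) = 2 * i + d + 2 by ring,
        show (2 * i + d + 1 - 1 : ℤ) = 2 * i + d by ring] at a1
      rw [show (2 * i + d + 1 + 2 : ℤ) = 2 * i + d + 3 by ring,
        show (2 * i + d + 1 - 2 : ℤ) = 2 * i + d - 1 by ring] at a2
      rw [show (2 * i + d + 1 + 3 : ℤ) = 2 * i + d + 4 by ring,
        show (2 * i + d + 1 - 3 : ℤ) = 2 * i + d - 2 by ring] at a3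
      rw [show (d + 1 + 1 : ℤ) = d + 2 by ring, show (d + 1 - 1 : ℤ) = d by ring] at b1
      rw [show (d + 1 + 2 : ℤ) = d + 3 by ring, show (d + 1 - 2 : ℤ) = d - 1 by ring] at b2
      rw [show (d + 1 + 3 : ℤ) = d + 4 by ring, show (d + 1 - 3 : ℤ) = d - 2 by ring] at b3
      simp only [Algebra.smul_def, map_ofNat, Nat.cast_one, Nat.cast_ofNat]
      linear_combination a1 - 2 * a2 - a3 + b1 - 2 * b2 - b3
    rw [hexp]
    simp only [map_add, map_sub, map_smul, ← hT, smul_eq_mul]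
  rw [key, hr1, hr2, T_mid (2 * i + d + 1) (by omega) (by omega),
    T_mid (d + 1) (by omega) (by omega), T_mid (2 * i + d + 2) (by omega) (by omega),
    T_mid (2 * i + d) (by omega) (by omega), T_mid (d + 2) (by omega) (by omega),
    T_mid (2 * i + d + 3) (by omega) (by omega), T_mid (2 * i + d - 1) (by omega) (by omega),
    T_mid (d + 3) (by omega) (by omega), T_mid (d + 4) (by omega) (by omega)]
  have hd0 : T d = if d = 0 then 2 * (n : ℚ) else 0 := by
    split_ifs with h
    · rw [h]; exact T_zero
    · exact T_mid _ (by omega) (by omega)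
  have hd1 : T (d - 1) = if d = 1 then 2 * (n : ℚ) else 0 := by
    split_ifs with h
    · rw [h]; exact T_zero
    · obtain rfl | h' := Nat.eq_zero_or_pos d
      · rw [← T_neg]; exact T_mid _ (by norm_num) (by omega)
      · exact T_mid _ (by omega) (by omega)
  have hd2 : T (d - 2) = if d = 2 then 2 * (n : ℚ) else 0 := by
    split_ifs with h
    · rw [h]; exact T_zero
    · obtain h' | h' := Nat.lt_or_ge d 2
      · rw [← T_neg]; exact T_mid _ (by omega) (by omega)
      · exact T_mid _ (by omega) (by omega)
  have hbot : T (2 * i + d - 2) = if i = 1 ∧ d = 0 then 2 * (n : ℚ) else 0 := by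
    split_ifs with h
    · rw [h.1, h.2]; exact T_zero
    · exact T_mid _ (by omega) (by omega)
  have htop : T (2 * i + d + 4) = if i = n - 2 ∧ d = 0 then -(2 * (n : ℚ)) else 0 := by
    split_ifs with h
    · rw [show (2 * i + d + 4 : ℤ) = 2 * n by omega, T_top]
    · exact T_mid _ (by omega) (by omega)
  rw [hd0, hd1, hd2, hbot, htop]
  refine ⟨fun h => ?_, fun h => ?_, fun h => ?_, fun h => ?_, fun h => ?_⟩ <;>
    split_ifs <;> first | (exfalso; omega) | ring
end

section
/- With K = ℚ(ζ + ζ^{-1}) for ζ a primitive 2^r-th root of unity (r ≥ 5), n = 2^{r-2}, O_K = ℤ[ζ + ζ^{-1}], α = 4 + e_1 - 2e_2 - e_3 where e_i = ζ^i + ζ^{-i}, and σ_1, …, σ_n the real embeddings of K, the set { ∏_{i=1}^{n} √(σ_i(α)/2^r) · |σ_i(y)| : y ∈ O_K, y ≠ 0 } has a least element, equal to 2^{(3 - r n)/2}. (This is the relative minimum product distance of the rotated D_n-lattice (1/√(2^{r-1}))σ_α(O_K), after rescaling to unit minimum norm.) -/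
open scoped IntermediateField

namespace Polynomial

variable {ι : Type*} [Fintype ι] {f : ℤ[X]} {t : ι → ℝ}

theorem roots_map_eq_of_card_eq_natDegree (hf : f.Monic) (ht : Function.Injective t)
    (hroot : ∀ i, aeval (t i) f = 0) (hcard : Fintype.card ι = f.natDegree) :
    (f.map (Int.castRingHom ℝ)).roots = Finset.univ.val.map t := by
  have hmonic : (f.map (Int.castRingHom ℝ)).Monic := hf.map _
  symm
  refine Multiset.eq_of_le_of_card_le ?_ ?_
  · refine (Multiset.le_iff_subset (Finset.univ.nodup.map ht)).2 fun x hx ↦ ?_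
    obtain ⟨i, -, rfl⟩ := Multiset.mem_map.1 hx
    rw [mem_roots hmonic.ne_zero, IsRoot, eval_map]
    exact hroot i
  · refine (card_roots' _).trans ?_
    rw [hf.natDegree_map, ← hcard]
    simp

theorem splits_map_of_card_eq_natDegree (hf : f.Monic) (ht : Function.Injective t)
    (hroot : ∀ i, aeval (t i) f = 0) (hcard : Fintype.card ι = f.natDegree) :
    (f.map (Int.castRingHom ℝ)).Splits := by
  rw [splits_iff_card_roots, roots_map_eq_of_card_eq_natDegree hf ht hroot hcard,
    hf.natDegree_map, ← hcard]
  simp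

/-- The product of the values of an integer polynomial at all the roots of a monic integer
polynomial is an integer. -/
theorem exists_intCast_eq_prod_aeval (hf : f.Monic) (ht : Function.Injective t)
    (hroot : ∀ i, aeval (t i) f = 0) (hcard : Fintype.card ι = f.natDegree) (p : ℤ[X]) :
    ∃ m : ℤ, (m : ℝ) = ∏ i, aeval (t i) p := by
  refine ⟨resultant f p f.natDegree p.natDegree, ?_⟩
  have h := resultant_eq_prod_eval (f.map (Int.castRingHom ℝ)) (p.map (Int.castRingHom ℝ))
    p.natDegree natDegree_map_le (splits_map_of_card_eq_natDegree hf ht hroot hcard)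
  rw [hf.natDegree_map, resultant_map_map, (hf.map _).leadingCoeff, one_pow, one_mul,
    roots_map_eq_of_card_eq_natDegree hf ht hroot hcard, Multiset.map_map] at h
  refine h.trans (Finset.prod_congr rfl fun i _ ↦ ?_)
  exact eval_map _ _

theorem aeval_eq_prod_sub (hf : f.Monic) (ht : Function.Injective t)
    (hroot : ∀ i, aeval (t i) f = 0) (hcard : Fintype.card ι = f.natDegree) (x : ℝ) :
    aeval x f = ∏ i, (x - t i) := by
  have h := (splits_map_of_card_eq_natDegree hf ht hroot hcard).eq_prod_roots_of_monic (hf.map _)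
  rw [roots_map_eq_of_card_eq_natDegree hf ht hroot hcard, Multiset.map_map] at h
  have h' := congrArg (eval x) h
  rw [eval_map] at h'
  refine h'.trans ?_
  change eval x (∏ i, (X - C (t i))) = _
  simp [eval_prod]

/-- The monic integer polynomial of degree `2 ^ k` sending `z + z⁻¹` to `z ^ 2 ^ k + z⁻¹ ^ 2 ^ k`. -/
noncomputable def doubling : ℕ → ℤ[X]
  | 0 => X
  | k + 1 => doubling k ^ 2 - C 2

theorem doubling_monic_and_natDegree (k : ℕ) :
    (doubling k).Monic ∧ (doubling k).natDegree = 2 ^ k := by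
  induction k with
  | zero => exact ⟨monic_X, natDegree_X⟩
  | succ k ih =>
    have hdeg : (doubling k ^ 2).natDegree = 2 ^ (k + 1) := by
      rw [ih.1.natDegree_pow, ih.2, pow_succ']
    refine ⟨(ih.1.pow 2).sub_of_left ?_, ?_⟩
    · refine degree_C_le.trans_lt (natDegree_pos_iff_degree_pos.1 ?_)
      rw [hdeg]
      positivity
    · rw [doubling, natDegree_sub_C, hdeg]

theorem aeval_doubling_succ {A : Type*} [CommRing A] (k : ℕ) (x : A) :
    aeval x (doubling (k + 1)) = aeval x (doubling k) ^ 2 - 2 := by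
  rw [doubling, map_sub, map_pow, aeval_C, eq_intCast, Int.cast_ofNat]

theorem aeval_doubling_add_inv {F : Type*} [Field F] {z : F} (hz : z ≠ 0) (k : ℕ) :
    aeval (z + z⁻¹) (doubling k) = z ^ 2 ^ k + z⁻¹ ^ 2 ^ k := by
  induction k with
  | zero => simp [doubling]
  | succ k ih =>
    have h : z ^ 2 ^ k * z⁻¹ ^ 2 ^ k = 1 := by rw [← mul_pow, mul_inv_cancel₀ hz, one_pow]
    rw [aeval_doubling_succ, ih, pow_succ 2 k, pow_mul, pow_mul]
    linear_combination 2 * h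

theorem aeval_two_doubling (k : ℕ) : aeval (2 : ℝ) (doubling k) = 2 := by
  induction k with
  | zero => simp [doubling]
  | succ k ih => rw [aeval_doubling_succ, ih]; norm_num

theorem aeval_neg_two_doubling_succ (k : ℕ) : aeval (-2 : ℝ) (doubling (k + 1)) = 2 := by
  induction k with
  | zero => rw [aeval_doubling_succ]; norm_num [doubling]
  | succ k ih => rw [aeval_doubling_succ, ih]; norm_num

theorem two_le_aeval_doubling {x : ℝ} (hx : 2 ≤ x) (k : ℕ) : 2 ≤ aeval x (doubling k) := by
  induction k with
  | zero => simpa [doubling] using hx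
  | succ k ih => rw [aeval_doubling_succ]; nlinarith

end Polynomial

theorem IsPrimitiveRoot.aeval_doubling_eq_zero {r : ℕ} (hr : 2 ≤ r) {ζ : ℂ}
    (hζ : IsPrimitiveRoot ζ (2 ^ r)) :
    Polynomial.aeval (ζ + ζ⁻¹) (Polynomial.doubling (r - 2)) = 0 := by
  obtain ⟨k, rfl⟩ := Nat.exists_eq_add_of_le' hr
  have h0 : ζ ≠ 0 := hζ.ne_zero (by positivity)
  have h4 : IsPrimitiveRoot (ζ ^ 2 ^ k) 4 := hζ.pow (by positivity) (by ring)
  have h2 : (ζ ^ 2 ^ k) ^ 2 = -1 :=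
    (h4.pow (a := 2) (b := 2) (by norm_num) rfl).eq_neg_one_of_two_right
  rw [Nat.add_sub_cancel, Polynomial.aeval_doubling_add_inv h0, inv_pow]
  have hne : ζ ^ 2 ^ k ≠ 0 := pow_ne_zero _ h0
  field_simp
  linear_combination h2

/-- With `K = ℚ(ζ + ζ⁻¹)` for `ζ` a primitive `2^r`-th root of unity
(`r ≥ 5`), `n = 2^{r-2}`, `O_K = ℤ[ζ + ζ⁻¹]`, `α = 4 + e₁ - 2e₂ - e₃` and
`σ₁, …, σₙ` the real embeddings of `K`, the set
`{ ∏ᵢ √(σᵢ(α)/2^r) · |σᵢ y| : y ∈ O_K, y ≠ 0 }` has least element `2^{(3-rn)/2}`. -/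
theorem relative_minimum_product_distance_Dn_two_power
    (r n : ℕ) (hr : 5 ≤ r) (hn : n = 2 ^ (r - 2))
    (ζ : ℂ) (hζ : IsPrimitiveRoot ζ (2 ^ r))
    (ξ : ℚ⟮ζ + ζ⁻¹⟯) (hξ : (ξ : ℂ) = ζ + ζ⁻¹)
    (e : ℕ → ℚ⟮ζ + ζ⁻¹⟯) (he0 : e 0 = 1)
    (he : ∀ i : ℕ, 1 ≤ i → ((e i : ℂ) = ζ ^ i + ζ⁻¹ ^ i))
    (α : ℚ⟮ζ + ζ⁻¹⟯) (hα : α = 4 + e 1 - 2 * e 2 - e 3)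
    (σ : Fin n → (ℚ⟮ζ + ζ⁻¹⟯ →+* ℝ)) (hσ : Function.Bijective σ) :
    IsLeast { x : ℝ | ∃ y ∈ Algebra.adjoin ℤ ({ξ} : Set ℚ⟮ζ + ζ⁻¹⟯), y ≠ 0 ∧
        x = ∏ i, Real.sqrt (σ i α / 2 ^ r) * |σ i y| }
      ((2 : ℝ) ^ (((3 : ℝ) - r * n) / 2)) := by
  have hinj : Function.Injective fun i ↦ σ i ξ := by
    intro i j hij
    refine hσ.1 ?_
    have h : (σ i).toRatAlgHom = (σ j).toRatAlgHom := by
      refine IntermediateField.adjoin_algHom_ext ℚ fun x hx ↦ ?_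
      obtain rfl : x = ζ + ζ⁻¹ := hx
      have hgen : (⟨ζ + ζ⁻¹, IntermediateField.subset_adjoin _ _ rfl⟩ : ℚ⟮ζ + ζ⁻¹⟯) = ξ :=
        Subtype.ext hξ.symm
      rw [hgen]
      exact hij
    ext x
    exact DFunLike.congr_fun h x
  have hζ0 : ζ ≠ 0 := hζ.ne_zero (by positivity)
  have hαξ : α = (2 + ξ) ^ 2 * (2 - ξ) := by
    apply Subtype.ext
    have h1 : ((α : ℚ⟮ζ + ζ⁻¹⟯) : ℂ) = 4 + (e 1 : ℂ) - 2 * (e 2 : ℂ) - (e 3 : ℂ) := by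
      rw [hα]; push_cast; rfl
    have h2 : (((2 + ξ) ^ 2 * (2 - ξ) : ℚ⟮ζ + ζ⁻¹⟯) : ℂ) = (2 + (ξ : ℂ)) ^ 2 * (2 - (ξ : ℂ)) := by
      push_cast; rfl
    rw [h1, h2, he 1 le_rfl, he 2 (by norm_num), he 3 (by norm_num), hξ]
    field_simp
    ring
  obtain ⟨hmonic, hdeg⟩ := Polynomial.doubling_monic_and_natDegree (r - 2)
  have hcard : Fintype.card (Fin n) = (Polynomial.doubling (r - 2)).natDegree := by
    rw [Fintype.card_fin, hdeg, hn]
  have hrootξ : Polynomial.aeval ξ (Polynomial.doubling (r - 2)) = 0 := by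
    apply Subtype.ext
    have h := Polynomial.aeval_algebraMap_apply ℂ ξ (Polynomial.doubling (r - 2))
    change Polynomial.aeval (ξ : ℂ) _ = ((Polynomial.aeval ξ _ : ℚ⟮ζ + ζ⁻¹⟯) : ℂ) at h
    rw [← h, hξ]
    exact hζ.aeval_doubling_eq_zero (by omega)
  have hσaeval (i : Fin n) (p : Polynomial ℤ) :
      σ i (Polynomial.aeval ξ p) = Polynomial.aeval (σ i ξ) p :=
    (Polynomial.aeval_algHom_apply (σ i).toIntAlgHom ξ p).symm
  have hroot (i : Fin n) : Polynomial.aeval (σ i ξ) (Polynomial.doubling (r - 2)) = 0 := by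
    rw [← hσaeval, hrootξ, map_zero]
  have hlt (i : Fin n) : σ i ξ < 2 := by
    by_contra! h
    have := Polynomial.two_le_aeval_doubling h (r - 2)
    linarith [hroot i]
  have hσα (i : Fin n) : σ i α = (2 + σ i ξ) ^ 2 * (2 - σ i ξ) := by
    have h2 : σ i 2 = 2 := map_ofNat (σ i) 2
    rw [hαξ, map_mul, map_pow, map_add, map_sub, h2]
  have hsub : ∏ i, (2 - σ i ξ) = 2 := by
    rw [← Polynomial.aeval_eq_prod_sub hmonic hinj hroot hcard, Polynomial.aeval_two_doubling]
  have hadd : (∏ i, (2 + σ i ξ)) ^ 2 = 4 := by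
    have h := Polynomial.aeval_eq_prod_sub hmonic hinj hroot hcard (-2)
    obtain ⟨k, hk⟩ := Nat.exists_eq_add_of_le' (show 1 ≤ r - 2 by omega)
    rw [hk, Polynomial.aeval_neg_two_doubling_succ] at h
    rw [← Finset.prod_pow]
    calc ∏ i, (2 + σ i ξ) ^ 2 = (∏ i, (-2 - σ i ξ)) ^ 2 := by
          rw [← Finset.prod_pow]
          exact Finset.prod_congr rfl fun i _ ↦ by ring
      _ = 4 := by rw [← h]; norm_num
  have hnorm : ∏ i, σ i α = 8 := by
    simp_rw [hσα]
    rw [Finset.prod_mul_distrib, Finset.prod_pow, hadd, hsub]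
    norm_num
  have hsqrt : ∏ i, Real.sqrt (σ i α / 2 ^ r) = (2 : ℝ) ^ (((3 : ℝ) - r * n) / 2) := by
    have hnonneg (i : Fin n) : 0 ≤ σ i α / 2 ^ r := by
      have := hlt i
      rw [hσα]
      exact div_nonneg (mul_nonneg (sq_nonneg _) (by linarith)) (by positivity)
    rw [← Real.sqrt_prod _ fun i _ ↦ hnonneg i, Finset.prod_div_distrib, hnorm,
      Finset.prod_const, Finset.card_univ, Fintype.card_fin, ← pow_mul, Real.sqrt_eq_rpow,
      div_eq_mul_one_div (3 - (r : ℝ) * n), Real.rpow_mul (by norm_num),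
      Real.rpow_sub (by norm_num)]
    norm_cast
  simp_rw [Finset.prod_mul_distrib, hsqrt]
  constructor
  · exact ⟨1, one_mem _, one_ne_zero, by simp⟩
  · rintro _ ⟨y, hy, hy0, rfl⟩
    rw [Algebra.adjoin_singleton_eq_range_aeval] at hy
    obtain ⟨p, rfl⟩ := hy
    refine le_mul_of_one_le_right (by positivity) ?_
    obtain ⟨m, hm⟩ := Polynomial.exists_intCast_eq_prod_aeval hmonic hinj hroot hcard p
    have hprod : (m : ℝ) = ∏ i, σ i (Polynomial.aeval ξ p) := by
      simp_rw [hσaeval, hm]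
    have hm0 : m ≠ 0 := by
      rintro rfl
      refine Finset.prod_ne_zero_iff.2 (fun i _ ↦ ?_) (hprod.symm.trans Int.cast_zero)
      exact (map_ne_zero (σ i)).2 hy0
    change 1 ≤ ∏ i, |σ i (Polynomial.aeval ξ p)|
    rw [← Finset.abs_prod, ← hprod]
    exact_mod_cast Int.one_le_abs hm0
end

section
/- Let p ≥ 7 be a prime, n = (p-1)/2, ζ a primitive p-th root of unity in ℂ, K = ℚ(ζ + ζ^{-1}), O_K = ℤ[ζ + ζ^{-1}], e_j = ζ^j + ζ^{-j}, α = 2 - e_1, and σ_1, …, σ_n the real embeddings of K. Let I be the ℤ-submodule of O_K spanned by {e_1, e_2, …, e_{n-1}, 2e_n}. Then the set { ∏_{i=1}^{n} √(σ_i(α)/(2p)) · |σ_i(y)| : y ∈ I, y ≠ 0 } has a least element, equal to 2^{(1-p)/4} · p^{(3-p)/4}. (This is the relative minimum product distance of the rotated D_n-lattice (1/√p)σ_α(I), after rescaling to unit minimum norm.) -/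
open scoped IntermediateField

open IntermediateField NumberField

section SumInv

variable {p : ℕ} {ζ : ℂ}

theorem adjoin_add_inv_le : ℚ⟮ζ + ζ⁻¹⟯ ≤ ℚ⟮ζ⟯ :=
  adjoin_simple_le_iff.2 <|
    add_mem (mem_adjoin_simple_self ℚ ζ) (inv_mem (mem_adjoin_simple_self ℚ ζ))

theorem finiteDimensional_adjoin_add_inv (hp : p ≠ 0) (hζ : ζ ^ p = 1) :
    FiniteDimensional ℚ ℚ⟮ζ + ζ⁻¹⟯ := by
  have : FiniteDimensional ℚ ℚ⟮ζ⟯ :=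
    adjoin.finiteDimensional (IsIntegral.of_pow (Nat.pos_of_ne_zero hp) (hζ ▸ isIntegral_one))
  exact Module.Finite.of_injective (inclusion (adjoin_add_inv_le (ζ := ζ))).toLinearMap
    (inclusion_injective (adjoin_add_inv_le (ζ := ζ)))

/-- A complex embedding of `ℚ(ζ + ζ⁻¹)` sends `ζ + ζ⁻¹` to a sum of the same shape. -/
theorem exists_map_gen_eq_add_inv (hp : p ≠ 0) (hζ : ζ ^ p = 1) (φ : ℚ⟮ζ + ζ⁻¹⟯ →ₐ[ℚ] ℂ) :
    ∃ z : ℂ, ‖z‖ = 1 ∧ φ (AdjoinSimple.gen ℚ (ζ + ζ⁻¹)) = z + z⁻¹ := by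
  obtain ⟨ψ, hψ⟩ := exists_algHom_adjoin_of_splits (F := ℚ) (S := {ζ})
    (fun s hs ↦ ⟨IsIntegral.of_pow (Nat.pos_of_ne_zero hp)
      ((Set.mem_singleton_iff.1 hs) ▸ hζ ▸ isIntegral_one), IsAlgClosed.splits _⟩)
    φ (adjoin_add_inv_le (ζ := ζ))
  refine ⟨ψ (AdjoinSimple.gen ℚ ζ), Complex.norm_eq_one_of_pow_eq_one (n := p) ?_ hp, ?_⟩
  · rw [← map_pow, ← map_one ψ]
    congr 1
    exact Subtype.ext (by simpa using hζ)
  · rw [← hψ, ← map_inv₀, ← map_add]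
    rfl

theorem isReal_of_adjoin_add_inv (hp : p ≠ 0) (hζ : ζ ^ p = 1) (φ : ℚ⟮ζ + ζ⁻¹⟯ →+* ℂ) :
    ComplexEmbedding.IsReal φ := by
  have key : (ComplexEmbedding.conjugate φ).toRatAlgHom = φ.toRatAlgHom := by
    obtain ⟨z, hz, h⟩ := exists_map_gen_eq_add_inv hp hζ φ.toRatAlgHom
    refine algHom_ext_of_eq_adjoin (s := {ζ + ζ⁻¹}) _ rfl ?_
    rintro x rfl
    change starRingEnd ℂ (φ (AdjoinSimple.gen ℚ (ζ + ζ⁻¹))) = φ (AdjoinSimple.gen ℚ (ζ + ζ⁻¹))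
    change φ (AdjoinSimple.gen ℚ (ζ + ζ⁻¹)) = _ at h
    rw [h, Complex.inv_eq_conj hz]
    simp [add_comm]
  exact congrArg (fun f : ℚ⟮ζ + ζ⁻¹⟯ →ₐ[ℚ] ℂ ↦ (f : ℚ⟮ζ + ζ⁻¹⟯ →+* ℂ)) key

end SumInv

section TotallyReal

variable {K ι : Type*} [Field K] [NumberField K] {σ : ι → (K →+* ℝ)}

/-- If all complex embeddings are real, a complete list of real embeddings is a complete list of
complex embeddings. -/
theorem bijective_ofRealHom_comp (hK : ∀ φ : K →+* ℂ, ComplexEmbedding.IsReal φ)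
    (hσ : Function.Bijective σ) :
    Function.Bijective fun i ↦ (Complex.ofRealHom.comp (σ i)).toRatAlgHom := by
  refine ⟨fun i j hij ↦ hσ.1 (RingHom.ext fun x ↦ ?_), fun φ ↦ ?_⟩
  · exact Complex.ofReal_injective (DFunLike.congr_fun hij x)
  · obtain ⟨i, hi⟩ := hσ.2 (hK φ).embedding
    refine ⟨i, AlgHom.ext fun x ↦ ?_⟩
    change ((σ i x : ℝ) : ℂ) = φ x
    rw [hi]
    exact (hK φ).coe_embedding_apply x

theorem prod_embeddings_eq_norm [Fintype ι] (hK : ∀ φ : K →+* ℂ, ComplexEmbedding.IsReal φ)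
    (hσ : Function.Bijective σ) (y : K) : ∏ i, σ i y = Algebra.norm ℚ y := by
  have h := Algebra.norm_eq_prod_embeddings ℚ ℂ y
  rw [← (bijective_ofRealHom_comp hK hσ).prod_comp (fun φ : K →ₐ[ℚ] ℂ ↦ φ y)] at h
  apply Complex.ofReal_injective
  push_cast
  exact h.symm

theorem finrank_eq_card_embeddings [Fintype ι] (hK : ∀ φ : K →+* ℂ, ComplexEmbedding.IsReal φ)
    (hσ : Function.Bijective σ) : Module.finrank ℚ K = Fintype.card ι := by
  rw [← AlgHom.card ℚ K ℂ]
  exact (Fintype.card_of_bijective (bijective_ofRealHom_comp hK hσ)).symm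

end TotallyReal

theorem one_le_abs_norm_of_isIntegral {K : Type*} [Field K] [NumberField K] {y : K}
    (hy : IsIntegral ℤ y) (h0 : y ≠ 0) : 1 ≤ |Algebra.norm ℚ y| := by
  obtain ⟨m, hm⟩ := IsIntegrallyClosed.isIntegral_iff.1 (Algebra.isIntegral_norm ℚ hy)
  have hm' : (m : ℚ) = Algebra.norm ℚ y := hm
  have : m ≠ 0 := by
    rintro rfl
    exact h0 ((Algebra.norm_eq_zero_iff (R := ℚ)).1 (hm'.symm.trans Int.cast_zero))
  rw [← hm']
  exact_mod_cast Int.one_le_abs this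

theorem abs_norm_eq_one_of_isIntegral_inv {K : Type*} [Field K] [NumberField K] {y : K}
    (hy : IsIntegral ℤ y) (hy' : IsIntegral ℤ y⁻¹) (h0 : y ≠ 0) : |Algebra.norm ℚ y| = 1 := by
  have h1 := one_le_abs_norm_of_isIntegral hy h0
  have h2 := one_le_abs_norm_of_isIntegral hy' (inv_ne_zero h0)
  have hmul : |Algebra.norm ℚ y| * |Algebra.norm ℚ y⁻¹| = 1 := by
    rw [← abs_mul, ← map_mul, mul_inv_cancel₀ h0, map_one, abs_one]
  nlinarith

/-- For `ζ` a root of unity of odd order, the inverse of `ζ + ζ⁻¹` is integral. -/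
theorem isIntegral_inv_add_inv {p n : ℕ} (hn : p = 2 * n + 1) {ζ : ℂ} (hζ : IsPrimitiveRoot ζ p)
    (hp : 1 < p) : ζ + ζ⁻¹ ≠ 0 ∧ IsIntegral ℤ (ζ + ζ⁻¹)⁻¹ := by
  have hζ0 : ζ ≠ 0 := hζ.ne_zero (by lia)
  have hint : IsIntegral ℤ ζ := hζ.isIntegral (by lia)
  have h2 : IsPrimitiveRoot (ζ ^ 2) p := hζ.pow_of_coprime 2 (by simp [hn])
  have h4 : IsPrimitiveRoot (ζ ^ 4) p := by
    have := h2.pow_of_coprime 2 (by simp [hn])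
    rwa [← pow_mul] at this
  have h2' : 1 - ζ ^ 2 ≠ 0 := sub_ne_zero.2 (h2.ne_one hp).symm
  have h4' : 1 - ζ ^ 4 ≠ 0 := sub_ne_zero.2 (h4.ne_one hp).symm
  have hsum : (∑ i ∈ Finset.range (n + 1), (ζ ^ 4) ^ i) * (1 - ζ ^ 4) = 1 - ζ ^ 2 := by
    rw [geom_sum_mul_neg, ← pow_mul, show 4 * (n + 1) = p * 2 + 2 by lia, pow_add, pow_mul,
      hζ.pow_eq_one]
    ring
  have hfac : (ζ + ζ⁻¹) * (ζ * ∑ i ∈ Finset.range (n + 1), (ζ ^ 4) ^ i) = 1 := by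
    have : (ζ + ζ⁻¹) * ζ = 1 + ζ ^ 2 := by rw [add_mul, inv_mul_cancel₀ hζ0]; ring
    rw [← mul_assoc, this]
    refine mul_right_cancel₀ h4' ?_
    rw [mul_assoc, hsum]
    ring
  refine ⟨left_ne_zero_of_mul_eq_one hfac, ?_⟩
  rw [inv_eq_of_mul_eq_one_right hfac]
  exact hint.mul (IsIntegral.sum _ fun i _ ↦ (hint.pow 4).pow i)

/-- If `ℚ(ζ + ζ⁻¹)` has degree `(p - 1) / 2`, the norm of `2 - (ζ + ζ⁻¹)` is `±p`. -/
theorem abs_norm_two_sub_add_inv {p n : ℕ} (hp : p.Prime) (hp2 : p ≠ 2) (hn : p = 2 * n + 1)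
    {ζ : ℂ} (hζ : IsPrimitiveRoot ζ p) (hdeg : Module.finrank ℚ ℚ⟮ζ + ζ⁻¹⟯ = n)
    {α : ℚ⟮ζ + ζ⁻¹⟯} (hα : (α : ℂ) = 2 - (ζ + ζ⁻¹)) : |Algebra.norm ℚ α| = p := by
  have : Fact p.Prime := ⟨hp⟩
  have : NeZero p := ⟨hp.ne_zero⟩
  have hζ0 : ζ ≠ 0 := hζ.ne_zero hp.ne_zero
  have hcyc : IsCyclotomicExtension {p} ℚ ℚ⟮ζ⟯ := by
    change IsCyclotomicExtension {p} ℚ ℚ⟮ζ⟯.toSubalgebra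
    rw [adjoin_simple_toSubalgebra_of_isAlgebraic
      ((hζ.isIntegral hp.pos).tower_top (A := ℚ)).isAlgebraic]
    exact hζ.adjoin_isCyclotomicExtension ℚ
  have hirr := Polynomial.cyclotomic.irreducible_rat hp.pos
  have : FiniteDimensional ℚ ℚ⟮ζ⟯ := IsCyclotomicExtension.finiteDimensional {p} ℚ _
  have hgen : IsPrimitiveRoot (AdjoinSimple.gen ℚ ζ) p :=
    IsPrimitiveRoot.coe_submonoidClass_iff.1 hζ
  let _ : Algebra ℚ⟮ζ + ζ⁻¹⟯ ℚ⟮ζ⟯ := (inclusion (adjoin_add_inv_le (ζ := ζ))).toRingHom.toAlgebra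
  have : IsScalarTower ℚ ℚ⟮ζ + ζ⁻¹⟯ ℚ⟮ζ⟯ := IsScalarTower.of_algebraMap_eq fun _ ↦ rfl
  have : FiniteDimensional ℚ⟮ζ + ζ⁻¹⟯ ℚ⟮ζ⟯ := FiniteDimensional.right ℚ _ _
  have : FiniteDimensional ℚ ℚ⟮ζ + ζ⁻¹⟯ := finiteDimensional_adjoin_add_inv hp.ne_zero hζ.pow_eq_one
  have hrank : Module.finrank ℚ⟮ζ + ζ⁻¹⟯ ℚ⟮ζ⟯ = 2 := by
    have h := Module.finrank_mul_finrank ℚ ℚ⟮ζ + ζ⁻¹⟯ ℚ⟮ζ⟯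
    rw [IsCyclotomicExtension.finrank ℚ⟮ζ⟯ hirr, Nat.totient_prime hp, hdeg] at h
    have : 0 < n := by have := hp.two_le; lia
    exact Nat.eq_of_mul_eq_mul_left this (by lia)
  have hmap : algebraMap ℚ⟮ζ + ζ⁻¹⟯ ℚ⟮ζ⟯ α =
      (AdjoinSimple.gen ℚ ζ - 1) * ((AdjoinSimple.gen ℚ ζ)⁻¹ - 1) := by
    apply Subtype.ext
    change (α : ℂ) = (ζ - 1) * (ζ⁻¹ - 1)
    rw [hα]
    field_simp
    ring
  have hsq : Algebra.norm ℚ α ^ 2 = (p : ℚ) ^ 2 := by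
    rw [← hrank, ← map_pow, ← Algebra.norm_algebraMap (S := ℚ⟮ζ⟯) α, Algebra.norm_norm, hmap, map_mul,
      hgen.norm_sub_one_of_prime_ne_two' hirr hp2,
      hgen.inv.norm_sub_one_of_prime_ne_two' hirr hp2, hrank, sq]
  rw [← abs_of_nonneg (Nat.cast_nonneg (α := ℚ) p)]
  exact (sq_eq_sq_iff_abs_eq_abs _ _).1 hsq

theorem embedding_two_sub_nonneg {p : ℕ} (hp : p ≠ 0) {ζ : ℂ} (hζ : ζ ^ p = 1)
    {α : ℚ⟮ζ + ζ⁻¹⟯} (hα : (α : ℂ) = 2 - (ζ + ζ⁻¹)) (τ : ℚ⟮ζ + ζ⁻¹⟯ →+* ℝ) : 0 ≤ τ α := by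
  obtain ⟨z, hz, h⟩ := exists_map_gen_eq_add_inv hp hζ (Complex.ofRealHom.comp τ).toRatAlgHom
  have hα' : α = 2 - AdjoinSimple.gen ℚ (ζ + ζ⁻¹) := Subtype.ext hα
  have hre : τ (AdjoinSimple.gen ℚ (ζ + ζ⁻¹)) = 2 * z.re := by
    have := congrArg Complex.re h
    rw [Complex.inv_eq_conj hz, Complex.add_re, Complex.conj_re, ← two_mul] at this
    exact this
  have := hz ▸ Complex.re_le_norm z
  rw [hα', map_sub, map_ofNat, hre]
  linarith

theorem prod_sqrt_div_mul_abs {ι : Type*} [Fintype ι] {a b : ι → ℝ} {c : ℝ}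
    (ha : ∀ i, 0 ≤ a i) (hc : 0 ≤ c) :
    ∏ i, Real.sqrt (a i / c) * |b i| =
      Real.sqrt ((∏ i, a i) / c ^ Fintype.card ι) * |∏ i, b i| := by
  rw [Finset.prod_mul_distrib, Finset.abs_prod, ← Finset.card_univ, ← Finset.prod_const,
    ← Finset.prod_div_distrib, Real.sqrt_prod]
  exact fun i _ ↦ div_nonneg (ha i) hc

theorem sqrt_div_two_mul_pow {p n : ℕ} (hn : p = 2 * n + 1) :
    Real.sqrt (p / (2 * p) ^ n) =
      (2 : ℝ) ^ (((1 : ℝ) - p) / 4) * (p : ℝ) ^ (((3 : ℝ) - p) / 4) := by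
  have hp : (0 : ℝ) < p := by rw [hn]; positivity
  have hn' : (p : ℝ) = 2 * n + 1 := by rw [hn]; push_cast; ring
  have hsplit : (p : ℝ) / (2 * p) ^ n = 2 ^ (-(n : ℝ)) * (p : ℝ) ^ (1 - (n : ℝ)) := by
    rw [Real.rpow_sub hp, Real.rpow_one, Real.rpow_neg zero_le_two, Real.rpow_natCast,
      Real.rpow_natCast, mul_pow]
    field_simp
  rw [hsplit, Real.sqrt_eq_rpow, Real.mul_rpow (by positivity) (by positivity),
    ← Real.rpow_mul zero_le_two, ← Real.rpow_mul hp.le]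
  congr 2 <;> linarith

/-- With `K = ℚ(ζ + ζ⁻¹)` for `ζ` a primitive `p`-th root of unity
(`p ≥ 7` prime), `n = (p-1)/2`, `α = 2 - e₁`, `σ₁, …, σₙ` the real embeddings of `K`,
and `I` the `ℤ`-span of `{e₁, …, e_{n-1}, 2eₙ}`, the set
`{ ∏ᵢ √(σᵢ(α)/(2p)) · |σᵢ y| : y ∈ I, y ≠ 0 }` has least element
`2^{(1-p)/4} · p^{(3-p)/4}`. -/
theorem relative_minimum_product_distance_Dn_odd_prime
    (p n : ℕ) (hp : p.Prime) (hp7 : 7 ≤ p) (hn : p = 2 * n + 1)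
    (ζ : ℂ) (hζ : IsPrimitiveRoot ζ p)
    (e : ℕ → ℚ⟮ζ + ζ⁻¹⟯)
    (he : ∀ j : ℕ, 1 ≤ j → ((e j : ℂ) = ζ ^ j + ζ⁻¹ ^ j))
    (α : ℚ⟮ζ + ζ⁻¹⟯) (hα : α = 2 - e 1)
    (σ : Fin n → (ℚ⟮ζ + ζ⁻¹⟯ →+* ℝ)) (hσ : Function.Bijective σ)
    (I : Submodule ℤ ℚ⟮ζ + ζ⁻¹⟯)
    (hI : I = Submodule.span ℤ
      ((e '' {i : ℕ | 1 ≤ i ∧ i ≤ n - 1}) ∪ {2 * e n})) :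
    IsLeast { x : ℝ | ∃ y ∈ I, y ≠ 0 ∧
        x = ∏ i, Real.sqrt (σ i α / (2 * p)) * |σ i y| }
      ((2 : ℝ) ^ (((1 : ℝ) - p) / 4) * (p : ℝ) ^ (((3 : ℝ) - p) / 4)) := by
  have : FiniteDimensional ℚ ℚ⟮ζ + ζ⁻¹⟯ := finiteDimensional_adjoin_add_inv hp.ne_zero hζ.pow_eq_one
  have : NumberField ℚ⟮ζ + ζ⁻¹⟯ := ⟨⟩
  have hreal := isReal_of_adjoin_add_inv hp.ne_zero hζ.pow_eq_one
  have he1 : (e 1 : ℂ) = ζ + ζ⁻¹ := by simpa using he 1 le_rfl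
  have hα' : (α : ℂ) = 2 - (ζ + ζ⁻¹) := by
    rw [hα]
    exact congrArg (2 - ·) he1
  have hint {x : ℚ⟮ζ + ζ⁻¹⟯} (hx : IsIntegral ℤ (x : ℂ)) : IsIntegral ℤ x :=
    (isIntegral_algebraMap_iff (B := ℂ) (algebraMap ℚ⟮ζ + ζ⁻¹⟯ ℂ).injective).1 hx
  have hζint : IsIntegral ℤ ζ := hζ.isIntegral hp.pos
  have hζint' : IsIntegral ℤ ζ⁻¹ := hζ.inv.isIntegral hp.pos
  have heint (j : ℕ) (hj : 1 ≤ j) : IsIntegral ℤ (e j) :=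
    hint (he j hj ▸ (hζint.pow j).add (hζint'.pow j))
  have hnonneg := embedding_two_sub_nonneg hp.ne_zero hζ.pow_eq_one hα'
  have hdeg : Module.finrank ℚ ℚ⟮ζ + ζ⁻¹⟯ = n := by
    simpa using finrank_eq_card_embeddings hreal hσ
  have hprodα : ∏ i, σ i α = p := by
    rw [← abs_of_nonneg (Finset.prod_nonneg fun i _ ↦ hnonneg (σ i)),
      prod_embeddings_eq_norm hreal hσ]
    exact_mod_cast congrArg (Rat.cast (K := ℝ))
      (abs_norm_two_sub_add_inv hp (by lia) hn hζ hdeg hα')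
  have hvalue (y : ℚ⟮ζ + ζ⁻¹⟯) : ∏ i, Real.sqrt (σ i α / (2 * p)) * |σ i y| =
      (2 : ℝ) ^ (((1 : ℝ) - p) / 4) * (p : ℝ) ^ (((3 : ℝ) - p) / 4) *
        (|Algebra.norm ℚ y| : ℚ) := by
    rw [prod_sqrt_div_mul_abs (fun i ↦ hnonneg (σ i)) (by positivity), hprodα, prod_embeddings_eq_norm hreal hσ,
      Fintype.card_fin, sqrt_div_two_mul_pow hn, Rat.cast_abs]
  have hIint {y : ℚ⟮ζ + ζ⁻¹⟯} (hy : y ∈ I) : IsIntegral ℤ y := by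
    suffices I ≤ Subalgebra.toSubmodule (integralClosure ℤ ℚ⟮ζ + ζ⁻¹⟯) from this hy
    rw [hI, Submodule.span_le]
    rintro _ (⟨j, hj, rfl⟩ | rfl)
    · exact heint j hj.1
    · exact (integralClosure ℤ ℚ⟮ζ + ζ⁻¹⟯).mul_mem (ofNat_mem _ 2) (heint n (by lia))
  obtain ⟨hne, hinv⟩ := isIntegral_inv_add_inv hn hζ hp.one_lt
  have he0 : e 1 ≠ 0 := fun h ↦ hne (by rw [← he1, h]; rfl)
  constructor
  · refine ⟨e 1, ?_, he0, ?_⟩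
    · rw [hI]
      exact Submodule.subset_span (Or.inl ⟨1, ⟨le_rfl, by lia⟩, rfl⟩)
    · rw [hvalue, abs_norm_eq_one_of_isIntegral_inv (heint 1 le_rfl) (hint ?_) he0, Rat.cast_one,
        mul_one]
      rw [← he1] at hinv
      exact hinv
  · rintro _ ⟨y, hy, hy0, rfl⟩
    rw [hvalue]
    refine le_mul_of_one_le_right (by positivity) ?_
    exact_mod_cast one_le_abs_norm_of_isIntegral (hIint hy) hy0
end
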